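/- arXiv:2601.13354 — 4 statements merged into one kernel-verified Lean document; each statement's English description precedes it below -/
import Mathlib

section
/- Let (S, B(S)) be a standard Borel space and let (P_t)_{t≥0} be a Markov semigroup on S such that for every x ∈ S and every Borel set A, the map t ↦ P_t(x,A) is Borel measurable and right-continuous on (0,∞). For α > 0, define the normalized resolvent R_α(x,A) := α ∫_0^∞ e^{−αt} P_t(x,A) dt. If a probability measure μ satisfies μ R_α = μ for every α > 0, then μ P_t = μ for all t ≥ 0. -/
/-! Fix a measurable set `A` and put `g t = ∫ P_t(x,A) μ(dx)`. Right-continuity of `t ↦ P_t(x,A)`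
makes `(t, x) ↦ P_t(x,A)` jointly measurable on `(0,∞) × S` (`measurable_indicator_uncurry`), so
Tonelli turns the invariance under `R_α` into `∫_0^∞ α e^{-αt} g(t) dt = μ A` for all `α > 0`: the
function `g` and the constant `μ A` have the same Laplace transform. Uniqueness of the Laplace
transform (`ae_eq_of_laplace_eq`) gives `g = μ A` almost everywhere on `(0,∞)`. By dominated
convergence `g` is right-continuous, hence `g = μ A` everywhere on `(0,∞)`; at `t = 0` the identity
is trivial.

Uniqueness of the Laplace transform is obtained by viewing `e^{-t} g(t) dt` as a finite measure on
`ℝ`. Its complex moment-generating function is analytic on `{Re z < 1}` and is determined there by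
its values on the real points, and on the imaginary axis it is the characteristic function. -/

open MeasureTheory ProbabilityTheory Filter Topology
open scoped ENNReal

/-- The normalized resolvent kernel `R_α(x,A) = α ∫_0^∞ e^{-αt} P_t(x,A) dt`. -/
noncomputable def normResolvent {S : Type*} [MeasurableSpace S] (P : ℝ → Kernel S S) (α : ℝ)
    (x : S) (A : Set S) : ℝ≥0∞ :=
  ∫⁻ t in Set.Ioi (0:ℝ), ENNReal.ofReal (α * Real.exp (-α * t)) * P t x A

/-- The finite measure `e^{-t} f(t) dt` on `(0,∞)`. -/
noncomputable def expTilt (f : ℝ → ℝ≥0∞) : Measure ℝ :=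
  (volume.restrict (Set.Ioi (0:ℝ))).withDensity fun t => ENNReal.ofReal (Real.exp (-t)) * f t

/-- The Laplace transform of `e^{-t} f(t) dt` at `-x`, in terms of that of `f` at `1 - x`. -/
lemma lintegral_exp_expTilt (f : ℝ → ℝ≥0∞) (hf : Measurable f) (x : ℝ) (hx : x < 1) :
    ∫⁻ t, ENNReal.ofReal (Real.exp (x * t)) ∂(expTilt f) =
      ENNReal.ofReal ((1 - x)⁻¹) * ∫⁻ t in Set.Ioi (0:ℝ),
        ENNReal.ofReal ((1 - x) * Real.exp (-(1 - x) * t)) * f t := by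
  have hx' : 0 < 1 - x := by linarith
  rw [expTilt, lintegral_withDensity_eq_lintegral_mul _ (by fun_prop) (by fun_prop),
    ← lintegral_const_mul _ (by fun_prop)]
  refine lintegral_congr fun t => ?_
  simp only [Pi.mul_apply]
  rw [mul_right_comm, ← mul_assoc, ← ENNReal.ofReal_mul (by positivity),
    ← ENNReal.ofReal_mul (by positivity), ← Real.exp_add, ← mul_assoc,
    inv_mul_cancel₀ hx'.ne', one_mul]
  congr 3
  ring_nf

lemma integrable_exp_expTilt (f : ℝ → ℝ≥0∞) (hf : Measurable f)
    (hfin : ∀ α : ℝ, 0 < α →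
      ∫⁻ t in Set.Ioi (0:ℝ), ENNReal.ofReal (α * Real.exp (-α * t)) * f t ≠ ∞)
    (x : ℝ) (hx : x < 1) : Integrable (fun t => Real.exp (x * t)) (expTilt f) := by
  refine ⟨by fun_prop, ?_⟩
  rw [hasFiniteIntegral_iff_ofReal (ae_of_all _ fun t => (Real.exp_pos _).le),
    lintegral_exp_expTilt f hf x hx]
  exact ENNReal.mul_lt_top ENNReal.ofReal_lt_top (hfin _ (by linarith)).lt_top

lemma analyticOnNhd_complexMGF_expTilt (f : ℝ → ℝ≥0∞) (hf : Measurable f)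
    (hfin : ∀ α : ℝ, 0 < α →
      ∫⁻ t in Set.Ioi (0:ℝ), ENNReal.ofReal (α * Real.exp (-α * t)) * f t ≠ ∞) :
    AnalyticOnNhd ℂ (complexMGF id (expTilt f)) {z | z.re < 1} := by
  refine analyticOnNhd_complexMGF.mono fun z hz => ?_
  have hsub : Set.Iio (1:ℝ) ⊆ integrableExpSet id (expTilt f) :=
    fun x hx => integrable_exp_expTilt f hf hfin x hx
  exact (interior_maximal hsub isOpen_Iio) hz

/-- Uniqueness of the Laplace transform on `(0,∞)`. -/
lemma ae_eq_of_laplace_eq (f g : ℝ → ℝ≥0∞) (hf : Measurable f) (hg : Measurable g)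
    (hfin : ∀ α : ℝ, 0 < α →
      ∫⁻ t in Set.Ioi (0:ℝ), ENNReal.ofReal (α * Real.exp (-α * t)) * f t ≠ ∞)
    (heq : ∀ α : ℝ, 0 < α →
      ∫⁻ t in Set.Ioi (0:ℝ), ENNReal.ofReal (α * Real.exp (-α * t)) * f t =
        ∫⁻ t in Set.Ioi (0:ℝ), ENNReal.ofReal (α * Real.exp (-α * t)) * g t) :
    f =ᵐ[volume.restrict (Set.Ioi (0:ℝ))] g := by
  have hfin' : ∀ α : ℝ, 0 < α →
      ∫⁻ t in Set.Ioi (0:ℝ), ENNReal.ofReal (α * Real.exp (-α * t)) * g t ≠ ∞ :=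
    fun α hα => heq α hα ▸ hfin α hα
  have hF : ∀ h : ℝ → ℝ≥0∞, Measurable h → (∀ α : ℝ, 0 < α →
      ∫⁻ t in Set.Ioi (0:ℝ), ENNReal.ofReal (α * Real.exp (-α * t)) * h t ≠ ∞) →
      IsFiniteMeasure (expTilt h) := fun h hh hhfin => by
    have := integrable_exp_expTilt h hh hhfin 0 one_pos
    simp only [zero_mul, Real.exp_zero] at this
    exact (integrable_const_iff_isFiniteMeasure one_ne_zero).1 this
  have := hF f hf hfin
  have := hF g hg hfin'
  have hreal : ∀ x : ℝ, x < 1 → complexMGF id (expTilt f) x = complexMGF id (expTilt g) x := by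
    intro x hx
    rw [complexMGF_ofReal, complexMGF_ofReal, mgf, mgf]
    simp only [id]
    rw [integral_eq_lintegral_of_nonneg_ae (ae_of_all _ fun t => (Real.exp_pos _).le)
        (by fun_prop),
      integral_eq_lintegral_of_nonneg_ae (ae_of_all _ fun t => (Real.exp_pos _).le)
        (by fun_prop), lintegral_exp_expTilt f hf x hx, lintegral_exp_expTilt g hg x hx,
      heq _ (by linarith)]
  have hEq : Set.EqOn (complexMGF id (expTilt f)) (complexMGF id (expTilt g)) {z | z.re < 1} := by
    refine AnalyticOnNhd.eqOn_of_preconnected_of_frequently_eq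
      (analyticOnNhd_complexMGF_expTilt f hf hfin) (analyticOnNhd_complexMGF_expTilt g hg hfin')
      (convex_halfSpace_re_lt 1).isPreconnected (z₀ := 0) (by simp) ?_
    have hfr : ∃ᶠ x : ℝ in 𝓝[≠] 0,
        complexMGF id (expTilt f) x = complexMGF id (expTilt g) x := by
      refine Eventually.frequently ?_
      filter_upwards [nhdsWithin_le_nhds (Iio_mem_nhds one_pos)] with x hx using hreal x hx
    refine Tendsto.frequently (f := fun x : ℝ => (x : ℂ)) ?_ hfr
    refine tendsto_nhdsWithin_iff.2 ⟨?_, ?_⟩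
    · exact (Complex.continuous_ofReal.tendsto' 0 0 (by simp)).mono_left nhdsWithin_le_nhds
    · filter_upwards [self_mem_nhdsWithin] with x hx
      simpa using hx
  have hmeas : expTilt f = expTilt g := by
    refine Measure.ext_of_charFun (funext fun t => ?_)
    rw [← complexMGF_id_mul_I, ← complexMGF_id_mul_I]
    exact hEq (by simp)
  have hd := (withDensity_eq_iff (by fun_prop) (by fun_prop) (by
    rw [← setLIntegral_univ, ← withDensity_apply _ MeasurableSet.univ]
    exact measure_ne_top (expTilt f) _)).1 hmeas
  filter_upwards [hd] with t ht
  exact (ENNReal.mul_right_inj (by simpa using Real.exp_pos _) ENNReal.ofReal_ne_top).1 ht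

/-- A function that is right-continuous in `t > 0` and measurable in `x` is jointly measurable:
it is the limit of its values at the times `(⌊(n+1)t⌋ + 1)/(n+1)`, which tend to `t` from above. -/
lemma measurable_indicator_uncurry {S : Type*} [MeasurableSpace S] (p : ℝ → S → ℝ≥0∞)
    (hp : ∀ t, Measurable (p t))
    (hrc : ∀ x t, 0 < t → ContinuousWithinAt (fun u => p u x) (Set.Ici t) t) :
    Measurable fun z : ℝ × S => (Set.Ioi (0:ℝ)).indicator (fun t => p t z.2) z.1 := by
  let τ : ℕ → ℝ → ℝ := fun n t => ((⌊((n:ℝ) + 1) * t⌋ : ℝ) + 1) / ((n:ℝ) + 1)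
  have hτ_ge : ∀ n t, t ≤ τ n t := fun n t => by
    rw [le_div_iff₀ (by positivity), mul_comm]
    exact (Int.lt_floor_add_one _).le
  have hτ_le : ∀ n t, τ n t ≤ t + 1 / ((n:ℝ) + 1) := fun n t => by
    have hn : (0:ℝ) < (n:ℝ) + 1 := by positivity
    have := Int.floor_le (((n:ℝ) + 1) * t)
    rw [div_le_iff₀ hn, add_mul t, one_div, inv_mul_cancel₀ hn.ne']
    linarith
  have hτ : ∀ t, Tendsto (fun n => τ n t) atTop (𝓝[≥] t) := fun t => by
    refine tendsto_nhdsWithin_iff.2 ⟨?_, Eventually.of_forall fun n => hτ_ge n t⟩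
    refine tendsto_of_tendsto_of_tendsto_of_le_of_le tendsto_const_nhds ?_
      (fun n => hτ_ge n t) (fun n => hτ_le n t)
    simpa using tendsto_const_nhds.add (tendsto_one_div_add_atTop_nhds_zero_nat (𝕜 := ℝ))
  refine measurable_of_tendsto_metrizable
    (f := fun (n : ℕ) (z : ℝ × S) => (Set.Ioi (0:ℝ) ×ˢ (Set.univ : Set S)).indicator
      (fun z => p (τ n z.1) z.2) z) (fun n => ?_) (tendsto_pi_nhds.2 fun z => ?_)
  · refine Measurable.indicator ?_ (measurableSet_Ioi.prod MeasurableSet.univ)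
    have h1 : Measurable fun w : ℤ × S => p (((w.1 : ℝ) + 1) / ((n:ℝ) + 1)) w.2 :=
      measurable_from_prod_countable_right fun k => hp (((k : ℝ) + 1) / ((n:ℝ) + 1))
    have h2 : Measurable fun z : ℝ × S => ((⌊((n:ℝ) + 1) * z.1⌋, z.2) : ℤ × S) := by
      refine Measurable.prodMk ?_ measurable_snd
      exact Int.measurable_floor.comp (measurable_fst.const_mul _)
    exact h1.comp h2
  · by_cases hz : 0 < z.1
    · simpa [Set.indicator, hz, Function.comp_def] using (hrc z.2 z.1 hz).tendsto.comp (hτ z.1)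
    · simp [Set.indicator, hz]

/-- **Resolvent invariance implies semigroup invariance.**
Assume `t ↦ P_t(x,A)` is Borel measurable and right-continuous on `(0,∞)`.
If `μ R_α = μ` for every `α > 0`, then `μ P_t = μ` for all `t ≥ 0`. -/
theorem semigroup_invariant_of_resolvent_invariant
    {S : Type*} [MeasurableSpace S] [StandardBorelSpace S]
    (P : ℝ → Kernel S S)
    (hmarkov : ∀ t : ℝ, 0 ≤ t → IsMarkovKernel (P t))
    (hP0 : P 0 = Kernel.id)
    (hsemi : ∀ s t : ℝ, 0 ≤ s → 0 ≤ t → ∀ x : S, ∀ A : Set S, MeasurableSet A →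
      P (t + s) x A = ∫⁻ y, P t y A ∂(P s x))
    (hmeas_t : ∀ x : S, ∀ A : Set S, MeasurableSet A → Measurable fun t : ℝ => P t x A)
    (hrc : ∀ x : S, ∀ A : Set S, MeasurableSet A → ∀ t : ℝ, 0 < t →
      ContinuousWithinAt (fun u : ℝ => P u x A) (Set.Ici t) t)
    (μ : Measure S) (hμ : IsProbabilityMeasure μ)
    (hinv : ∀ α : ℝ, 0 < α → ∀ A : Set S, MeasurableSet A →
      ∫⁻ x, normResolvent P α x A ∂μ = μ A) :
    ∀ t : ℝ, 0 ≤ t → ∀ A : Set S, MeasurableSet A → ∫⁻ x, P t x A ∂μ = μ A := by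
  intro t ht A hA
  rcases ht.eq_or_lt with rfl | ht
  · simp only [hP0, Kernel.id_apply, Measure.dirac_apply' _ hA]
    rw [lintegral_indicator_one hA]
  -- `q` is `P_t(x,A)` cut off to `t > 0`, where it is jointly measurable.
  let q : ℝ × S → ℝ≥0∞ := fun z => (Set.Ioi (0:ℝ)).indicator (fun t => P t z.2 A) z.1
  have hq : Measurable q := measurable_indicator_uncurry (fun t x => P t x A)
    (fun t => Kernel.measurable_coe _ hA) (fun x t ht => hrc x A hA t ht)
  let g : ℝ → ℝ≥0∞ := fun t => ∫⁻ x, q (t, x) ∂μ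
  have hg : Measurable g := hq.lintegral_prod_right'
  have hgP : ∀ s, 0 < s → g s = ∫⁻ x, P s x A ∂μ := fun s hs =>
    lintegral_congr fun x => by simp [q, hs]
  -- Invariance applied to the whole space says that `α e^{-αt}` integrates to one.
  have hone : ∀ α : ℝ, 0 < α →
      ∫⁻ t in Set.Ioi (0:ℝ), ENNReal.ofReal (α * Real.exp (-α * t)) = 1 := fun α hα => by
    have h := hinv α hα Set.univ MeasurableSet.univ
    have h2 : ∀ x, normResolvent P α x Set.univ =
        ∫⁻ t in Set.Ioi (0:ℝ), ENNReal.ofReal (α * Real.exp (-α * t)) := fun x =>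
      setLIntegral_congr_fun measurableSet_Ioi fun s hs => by
        have := hmarkov s (le_of_lt hs)
        simp
    simpa [h2] using h
  have hLg : ∀ α : ℝ, 0 < α →
      ∫⁻ t in Set.Ioi (0:ℝ), ENNReal.ofReal (α * Real.exp (-α * t)) * g t = μ A := fun α hα => by
    rw [← hinv α hα A hA]
    have h1 : ∀ x, normResolvent P α x A = ∫⁻ t in Set.Ioi (0:ℝ),
        ENNReal.ofReal (α * Real.exp (-α * t)) * q (t, x) := fun x =>
      setLIntegral_congr_fun measurableSet_Ioi fun s hs => by
        simp [q, Set.mem_Ioi.1 hs]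
    simp_rw [h1]
    rw [lintegral_lintegral_swap (by
      refine Measurable.aemeasurable ?_
      exact (by fun_prop : Measurable fun z : S × ℝ =>
        ENNReal.ofReal (α * Real.exp (-α * z.2))).mul (hq.comp measurable_swap))]
    exact lintegral_congr fun s => (lintegral_const_mul _ (by fun_prop)).symm
  have hae : g =ᵐ[volume.restrict (Set.Ioi (0:ℝ))] fun _ => μ A := by
    refine ae_eq_of_laplace_eq g _ hg measurable_const
      (fun α hα => by rw [hLg α hα]; exact measure_ne_top _ _) (fun α hα => ?_)
    rw [hLg α hα, lintegral_mul_const _ (by fun_prop), hone α hα, one_mul]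
  rw [ae_eq_restrict_iff_indicator_ae_eq measurableSet_Ioi] at hae
  have hlim : Tendsto (fun s => ∫⁻ x, P s x A ∂μ) (𝓝[>] t) (𝓝 (∫⁻ x, P t x A ∂μ)) := by
    refine tendsto_lintegral_filter_of_dominated_convergence (fun _ => 1)
      (Eventually.of_forall fun s => Kernel.measurable_coe _ hA) ?_ (by simp)
      (ae_of_all _ fun x =>
        (hrc x A hA t ht).tendsto.mono_left (nhdsWithin_mono _ Set.Ioi_subset_Ici_self))
    filter_upwards [self_mem_nhdsWithin] with s hs
    have := hmarkov s (ht.trans hs).le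
    exact ae_of_all _ fun x => prob_le_one
  -- The full-measure set where `g = μ A` is dense, so it accumulates at `t` from the right.
  have hfr : ∃ᶠ s in 𝓝[>] t, ∫⁻ x, P s x A ∂μ = μ A := by
    rw [(nhdsGT_basis t).frequently_iff]
    intro b hb
    obtain ⟨s, hs, hs'⟩ := (Measure.dense_of_ae hae).exists_between hb
    have hs0 : 0 < s := ht.trans hs'.1
    refine ⟨s, hs', ?_⟩
    rw [← hgP s hs0]
    simpa [Set.indicator, hs0] using hs
  by_contra hne
  exact hfr (hlim.eventually_ne hne)
end

section
/- Let (S, B(S)) be a standard Borel space and let (P_t)_{t≥0} be a Markov semigroup on S such that for every x ∈ S and every Borel set A the map t ↦ P_t(x,A) is Borel measurable and right-continuous on (0,∞). Assume (P_t)_{t≥0} is ψ-irreducible for some nonzero σ-finite measure ψ. Then every probability measure μ invariant for (P_t)_{t≥0} satisfies ψ ≪ μ. -/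
/-! If `μ A = 0`, invariance gives `∫ P_q(x,A) μ(dx) = 0` for each rational `q > 0`, so some single
`x` satisfies `P_q(x,A) = 0` for all these countably many `q` at once. Right-continuity
on `(0,∞)` extends this to `P_t(x,A) = 0` for all real `t > 0`, and ψ-irreducibility at this one
point `x` then forces `ψ A = 0`. -/

open MeasureTheory ProbabilityTheory Filter Topology
open scoped ENNReal

/-- **Every invariant probability measure dominates the irreducibility measure.**
Let `(P_t)_{t≥0}` be a Markov semigroup on a standard Borel space with `t ↦ P_t(x,A)`
Borel measurable and right-continuous on `(0,∞)`, and assume `(P_t)` is ψ-irreducible for a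
nonzero σ-finite measure `ψ`. Then every invariant probability measure `μ` satisfies
`ψ ≪ μ`. -/
theorem psi_abs_cont_invariant_of_irreducible
    {S : Type*} [MeasurableSpace S] [StandardBorelSpace S]
    (P : ℝ → Kernel S S)
    (hmarkov : ∀ t : ℝ, 0 ≤ t → IsMarkovKernel (P t))
    (hP0 : P 0 = Kernel.id)
    (hsemi : ∀ s t : ℝ, 0 ≤ s → 0 ≤ t → ∀ x : S, ∀ A : Set S, MeasurableSet A →
      P (t + s) x A = ∫⁻ y, P t y A ∂(P s x))
    (hmeas_t : ∀ x : S, ∀ A : Set S, MeasurableSet A → Measurable fun t : ℝ => P t x A)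
    (hrc : ∀ x : S, ∀ A : Set S, MeasurableSet A → ∀ t : ℝ, 0 < t →
      ContinuousWithinAt (fun u : ℝ => P u x A) (Set.Ici t) t)
    (ψ : Measure S) (hψσ : SigmaFinite ψ) (hψ : ψ ≠ 0)
    (hirr : ∀ A : Set S, MeasurableSet A → 0 < ψ A → ∀ x : S, ∃ t : ℝ, 0 < t ∧ 0 < P t x A)
    (μ : Measure S) (hμ : IsProbabilityMeasure μ)
    (hinv : ∀ t : ℝ, 0 ≤ t → ∀ A : Set S, MeasurableSet A → ∫⁻ x, P t x A ∂μ = μ A) :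
    ψ ≪ μ := by
  refine Measure.AbsolutelyContinuous.mk fun A hA hμA => ?_
  by_contra hψA
  have hae : ∀ᵐ x ∂μ, ∀ q : ℚ, 0 < q → P q x A = 0 := by
    refine ae_all_iff.2 fun q => ?_
    by_cases hq : 0 < q
    · have hint : ∫⁻ x, P q x A ∂μ = 0 := by
        rw [hinv q (by exact_mod_cast hq.le) A hA, hμA]
      filter_upwards [(lintegral_eq_zero_iff ((P q).measurable_coe hA)).1 hint] with x hx _
      exact hx
    · exact Eventually.of_forall fun _ h => absurd h hq
  -- `μ` is a probability measure, so an almost sure property holds at some point.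
  obtain ⟨x, hx⟩ := hae.exists
  obtain ⟨t, ht, hpos⟩ := hirr A hA (pos_iff_ne_zero.2 hψA) x
  have hev : ∀ᶠ u in 𝓝[≥] t, 0 < P u x A := (hrc x A hA t ht).eventually (lt_mem_nhds hpos)
  obtain ⟨u, htu, hu⟩ := mem_nhdsGE_iff_exists_Ico_subset.1 hev
  obtain ⟨q, htq, hqu⟩ := exists_rat_btwn (show t < u from htu)
  have hq : 0 < q := by exact_mod_cast ht.trans htq
  exact (hu ⟨htq.le, hqu⟩ : 0 < P q x A).ne' (hx q hq)
end

section
/- Let (S, B(S)) be a standard Borel space and let (P_t)_{t≥0} be a Markov semigroup on S such that for every x ∈ S and every Borel set A the map t ↦ P_t(x,A) is Borel measurable and right-continuous on (0,∞). Assume (P_t)_{t≥0} is ψ-irreducible for some nonzero σ-finite measure ψ and admits at least one invariant probability measure. Then the invariant probability measure is unique: any two probability measures μ_1, μ_2 invariant for (P_t)_{t≥0} coincide. -/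
/-!
Put `α = μ₁ - μ₂` and `β = μ₂ - μ₁`, the positive and negative parts of the Jordan decomposition of
the signed measure `μ₁ - μ₂`. Each is again invariant (`invariant_sub`): since
`μ₁ ≤ α + μ₂`, applying `P_t` gives `μ₁ ≤ α P_t + μ₂`, so `α ≤ α P_t` by minimality of `α`, and the
two measures have the same total mass. If `μ₁ ≠ μ₂`, both `α` and `β` are nonzero.

Irreducibility forces `ψ ≪ π` for every nonzero invariant `π`
(`absolutelyContinuous_of_invariant`). By right-continuity the time `t` with `P_t(x, A) > 0` may be
taken rational, so if `π A = ∫ P_q(x, A) π(dx)` vanished for all rational `q > 0`, then `π`-almost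
every `x` would have `P_q(x, A) = 0` for all these `q` at once, which is impossible when `ψ A > 0`.

Hence `ψ` is absolutely continuous with respect to both of the mutually singular measures `α`
and `β`, and must be zero.
-/

open MeasureTheory ProbabilityTheory Filter Topology
open scoped ENNReal

/-- Truncated subtraction of finite measures can be undone up to an inequality, without assuming
`ν ≤ μ`; this is checked separately on the two pieces of a Hahn decomposition. -/
lemma le_sub_add {S : Type*} [MeasurableSpace S] (μ ν : Measure S) [IsFiniteMeasure μ]
    [IsFiniteMeasure ν] : μ ≤ (μ - ν) + ν := by
  obtain ⟨s, hs⟩ := exists_isHahnDecomposition μ ν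
  have hm := hs.measurableSet
  have hc : (μ - ν).restrict sᶜ + ν.restrict sᶜ = μ.restrict sᶜ := by
    rw [Measure.restrict_sub_eq_restrict_sub_restrict hm.compl]
    exact Measure.sub_add_cancel_of_le hs.ge_on_compl
  calc μ = μ.restrict s + μ.restrict sᶜ := (Measure.restrict_add_restrict_compl hm).symm
    _ ≤ ((μ - ν).restrict s + ν.restrict s) + ((μ - ν).restrict sᶜ + ν.restrict sᶜ) := by
        rw [hc]
        exact add_le_add (hs.le_on.trans (Measure.le_add_left le_rfl)) le_rfl
    _ = ((μ - ν).restrict s + (μ - ν).restrict sᶜ) + (ν.restrict s + ν.restrict sᶜ) := by abel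
    _ = (μ - ν) + ν := by
        rw [Measure.restrict_add_restrict_compl hm, Measure.restrict_add_restrict_compl hm]

/-- The positive part of the difference of two finite invariant measures is invariant. -/
lemma invariant_sub {S : Type*} [MeasurableSpace S] {κ : Kernel S S} [IsMarkovKernel κ]
    {μ ν : Measure S} [IsFiniteMeasure μ] [IsFiniteMeasure ν]
    (hμ : Kernel.Invariant κ μ) (hν : Kernel.Invariant κ ν) : Kernel.Invariant κ (μ - ν) := by
  have hle : μ - ν ≤ (μ - ν).bind κ := by
    refine Measure.sub_le_of_le_add ?_
    calc μ = μ.bind κ := hμ.def.symm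
      _ ≤ ((μ - ν) + ν).bind κ := by
          refine Measure.le_iff.2 fun A hA => ?_
          rw [Measure.bind_apply hA κ.aemeasurable, Measure.bind_apply hA κ.aemeasurable]
          exact lintegral_mono' (le_sub_add μ ν) le_rfl
      _ = (μ - ν).bind κ + ν := by rw [Measure.comp_add, hν.def]
  exact (Measure.eq_of_le_of_measure_univ_eq hle Measure.comp_apply_univ.symm).symm

/-- If the signed difference of two probability measures has zero positive part, they coincide. -/
lemma eq_of_measure_sub_eq_zero {S : Type*} [MeasurableSpace S] {μ ν : Measure S} [IsProbabilityMeasure μ]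
    [IsProbabilityMeasure ν] (h : μ - ν = 0) : μ = ν := by
  have hle := le_sub_add μ ν
  rw [h, zero_add] at hle
  exact Measure.eq_of_le_of_isProbabilityMeasure hle

/-- An irreducibility measure is absolutely continuous with respect to every nonzero invariant
measure. -/
lemma absolutelyContinuous_of_invariant {S : Type*} [MeasurableSpace S] {P : ℝ → Kernel S S}
    (hrc : ∀ x : S, ∀ A : Set S, MeasurableSet A → ∀ t : ℝ, 0 < t →
      ContinuousWithinAt (fun u : ℝ => P u x A) (Set.Ici t) t)
    {ψ : Measure S}
    (hirr : ∀ A : Set S, MeasurableSet A → 0 < ψ A → ∀ x : S, ∃ t : ℝ, 0 < t ∧ 0 < P t x A)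
    {π : Measure S} (hπ : π ≠ 0) (hinv : ∀ t : ℝ, 0 ≤ t → Kernel.Invariant (P t) π) :
    ψ ≪ π := by
  refine Measure.AbsolutelyContinuous.mk fun A hA hπA => ?_
  by_contra hψA
  have hnull : ∀ᵐ x ∂π, ∀ q : ℚ, 0 < q → P q x A = 0 := by
    refine ae_all_iff.2 fun q => ?_
    by_cases hq : 0 < q
    · have h := hπA
      rw [← (hinv q (by exact_mod_cast hq.le)).def, Measure.bind_apply hA (P q).aemeasurable,
        lintegral_eq_zero_iff ((P q).measurable_coe hA)] at h
      filter_upwards [h] with x hx _ using hx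
    · exact Eventually.of_forall fun x h => absurd h hq
  have : NeBot (ae π) := ae_neBot.2 hπ
  obtain ⟨x, hx⟩ := hnull.exists
  obtain ⟨t, ht, hpos⟩ := hirr A hA (pos_iff_ne_zero.2 hψA) x
  have hev : ∀ᶠ u in 𝓝[>] t, 0 < P u x A :=
    ((hrc x A hA t ht).mono Set.Ioi_subset_Ici_self).eventually (lt_mem_nhds hpos)
  obtain ⟨b, hb, hsub⟩ := mem_nhdsGT_iff_exists_Ioo_subset.1 hev
  obtain ⟨q, htq, hqb⟩ := exists_rat_btwn (Set.mem_Ioi.1 hb)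
  have hqpos : 0 < P q x A := hsub ⟨htq, hqb⟩
  exact hqpos.ne' (hx q (by exact_mod_cast ht.trans htq))

/-- **Uniqueness of the invariant probability measure under ψ-irreducibility.**
Let `(P_t)_{t≥0}` be a Markov semigroup on a standard Borel space with `t ↦ P_t(x,A)`
Borel measurable and right-continuous on `(0,∞)`, ψ-irreducible for a nonzero σ-finite
measure `ψ`. Then any two invariant probability measures coincide. -/
theorem invariant_measure_unique_of_irreducible
    {S : Type*} [MeasurableSpace S] [StandardBorelSpace S]
    (P : ℝ → Kernel S S)
    (hmarkov : ∀ t : ℝ, 0 ≤ t → IsMarkovKernel (P t))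
    (hP0 : P 0 = Kernel.id)
    (hsemi : ∀ s t : ℝ, 0 ≤ s → 0 ≤ t → ∀ x : S, ∀ A : Set S, MeasurableSet A →
      P (t + s) x A = ∫⁻ y, P t y A ∂(P s x))
    (hmeas_t : ∀ x : S, ∀ A : Set S, MeasurableSet A → Measurable fun t : ℝ => P t x A)
    (hrc : ∀ x : S, ∀ A : Set S, MeasurableSet A → ∀ t : ℝ, 0 < t →
      ContinuousWithinAt (fun u : ℝ => P u x A) (Set.Ici t) t)
    (ψ : Measure S) (hψσ : SigmaFinite ψ) (hψ : ψ ≠ 0)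
    (hirr : ∀ A : Set S, MeasurableSet A → 0 < ψ A → ∀ x : S, ∃ t : ℝ, 0 < t ∧ 0 < P t x A)
    (μ₁ μ₂ : Measure S) (hμ₁ : IsProbabilityMeasure μ₁) (hμ₂ : IsProbabilityMeasure μ₂)
    (hinv₁ : ∀ t : ℝ, 0 ≤ t → ∀ A : Set S, MeasurableSet A → ∫⁻ x, P t x A ∂μ₁ = μ₁ A)
    (hinv₂ : ∀ t : ℝ, 0 ≤ t → ∀ A : Set S, MeasurableSet A → ∫⁻ x, P t x A ∂μ₂ = μ₂ A) :
    μ₁ = μ₂ := by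
  have key : ∀ μ : Measure S, (∀ t : ℝ, 0 ≤ t → ∀ A : Set S, MeasurableSet A →
      ∫⁻ x, P t x A ∂μ = μ A) → ∀ t : ℝ, 0 ≤ t → Kernel.Invariant (P t) μ := by
    intro μ h t ht
    refine Measure.ext fun A hA => ?_
    rw [Measure.bind_apply hA (P t).aemeasurable, h t ht A hA]
  have i₁ := key μ₁ hinv₁
  have i₂ := key μ₂ hinv₂
  by_contra hne
  have ac₁ : ψ ≪ μ₁ - μ₂ := absolutelyContinuous_of_invariant hrc hirr
    (fun h => hne (eq_of_measure_sub_eq_zero h)) fun t ht =>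
      have := hmarkov t ht
      invariant_sub (i₁ t ht) (i₂ t ht)
  have ac₂ : ψ ≪ μ₂ - μ₁ := absolutelyContinuous_of_invariant hrc hirr
    (fun h => hne (eq_of_measure_sub_eq_zero h).symm) fun t ht =>
      have := hmarkov t ht
      invariant_sub (i₂ t ht) (i₁ t ht)
  have hsing : ψ.MutuallySingular ψ := Measure.mutually_singular_measure_sub.mono_ac ac₁ ac₂
  exact hψ ((Measure.MutuallySingular.self_iff ψ).1 hsing)
end

section
/- Let R be a Markov kernel on a measurable space (S, B(S)) and let μ^+ and μ^- be two mutually singular probability measures on S, each invariant for R. Then there exist disjoint measurable sets B^+ and B^- that are absorbing for R (i.e. R(x,B^±) = 1 for every x ∈ B^±) and satisfy μ^+(B^+) = 1 and μ^-(B^-) = 1. -/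
/-! Every measurable set of full measure for an invariant probability measure contains an absorbing
set of full measure (`exists_absorbing_subset`): repeatedly remove the points from which the chain
can leave the current set. By invariance each step removes only a null set, and the intersection of
the resulting decreasing sequence is absorbing. Applying this to `C` for `μp` and to `Cᶜ` for `μm`
gives absorbing sets that are disjoint because they lie in complementary sets. -/

open MeasureTheory ProbabilityTheory
open scoped ENNReal

/-- The points of `C` from which the first `n` iterates of `R` stay in `C` almost surely, defined
recursively by removing the points that can leave the previous set in one step. -/
def stayingSet {S : Type*} [MeasurableSpace S] (R : Kernel S S) (C : Set S) : ℕ → Set S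
  | 0 => C
  | n + 1 => stayingSet R C n ∩ {x | R x (stayingSet R C n) = 1}

lemma measurableSet_stayingSet {S : Type*} [MeasurableSpace S] (R : Kernel S S) {C : Set S}
    (hC : MeasurableSet C) (n : ℕ) : MeasurableSet (stayingSet R C n) := by
  induction n with
  | zero => exact hC
  | succ n ih => exact ih.inter (R.measurable_coe ih (measurableSet_singleton 1))

lemma stayingSet_mem_ae {S : Type*} [MeasurableSpace S] (R : Kernel S S) [IsMarkovKernel R]
    (μ : Measure S) (hinv : ∀ A : Set S, MeasurableSet A → ∫⁻ x, R x A ∂μ = μ A)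
    {C : Set S} (hC : MeasurableSet C) (hCμ : C ∈ ae μ) (n : ℕ) :
    stayingSet R C n ∈ ae μ := by
  induction n with
  | zero => exact hCμ
  | succ n ih =>
    have hm := measurableSet_stayingSet R hC n
    refine Filter.inter_mem ih ?_
    -- By invariance, `x ↦ R x (stayingSet R C n)ᶜ` has integral zero, so it vanishes a.e.
    have h0 : ∫⁻ x, R x (stayingSet R C n)ᶜ ∂μ = 0 := by
      rw [hinv _ hm.compl]
      exact mem_ae_iff.mp ih
    rw [lintegral_eq_zero_iff (R.measurable_coe hm.compl)] at h0
    filter_upwards [h0] with x hx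
    exact (prob_compl_eq_zero_iff hm).mp hx

lemma exists_absorbing_subset {S : Type*} [MeasurableSpace S] (R : Kernel S S) [IsMarkovKernel R]
    (μ : Measure S) [IsProbabilityMeasure μ]
    (hinv : ∀ A : Set S, MeasurableSet A → ∫⁻ x, R x A ∂μ = μ A)
    {C : Set S} (hC : MeasurableSet C) (hCμ : μ C = 1) :
    ∃ B ⊆ C, MeasurableSet B ∧ (∀ x ∈ B, R x B = 1) ∧ μ B = 1 := by
  have hm := measurableSet_stayingSet R hC
  have hB : MeasurableSet (⋂ n, stayingSet R C n) := .iInter hm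
  refine ⟨⋂ n, stayingSet R C n, Set.iInter_subset _ 0, hB, fun x hx => ?_, ?_⟩
  · rw [← mem_ae_iff_prob_eq_one hB, countable_iInter_mem]
    intro n
    rw [mem_ae_iff_prob_eq_one (hm n)]
    exact (Set.mem_iInter.mp hx (n + 1)).2
  · rw [← mem_ae_iff_prob_eq_one hB, countable_iInter_mem]
    exact stayingSet_mem_ae R μ hinv hC ((mem_ae_iff_prob_eq_one hC).mpr hCμ)

/-- **Mutually singular invariant measures yield disjoint absorbing sets.**
Let `R` be a Markov kernel and `μ⁺`, `μ⁻` two mutually singular invariant probability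
measures (witnessed by a measurable set `C` with `μ⁺(C) = 1` and `μ⁻(C) = 0`). Then there
exist disjoint measurable sets `B⁺`, `B⁻`, absorbing for `R`, with `μ⁺(B⁺) = 1` and
`μ⁻(B⁻) = 1`. -/
theorem disjoint_absorbing_sets_of_singular_invariant
    {S : Type*} [MeasurableSpace S]
    (R : Kernel S S) (hR : IsMarkovKernel R)
    (μp μm : Measure S) (hμp : IsProbabilityMeasure μp) (hμm : IsProbabilityMeasure μm)
    (hinvp : ∀ A : Set S, MeasurableSet A → ∫⁻ x, R x A ∂μp = μp A)
    (hinvm : ∀ A : Set S, MeasurableSet A → ∫⁻ x, R x A ∂μm = μm A)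
    (C : Set S) (hC : MeasurableSet C) (hCp : μp C = 1) (hCm : μm C = 0) :
    ∃ Bp Bm : Set S, MeasurableSet Bp ∧ MeasurableSet Bm ∧ Disjoint Bp Bm ∧
      (∀ x ∈ Bp, R x Bp = 1) ∧ (∀ x ∈ Bm, R x Bm = 1) ∧ μp Bp = 1 ∧ μm Bm = 1 := by
  obtain ⟨Bp, hpC, hBp, hpabs, hp1⟩ := exists_absorbing_subset R μp hinvp hC hCp
  obtain ⟨Bm, hmC, hBm, hmabs, hm1⟩ :=
    exists_absorbing_subset R μm hinvm hC.compl ((prob_compl_eq_one_iff hC).mpr hCm)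
  exact ⟨Bp, Bm, hBp, hBm, Set.disjoint_of_subset hpC hmC disjoint_compl_right,
    hpabs, hmabs, hp1, hm1⟩
end
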